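/- Let r : closure(Ω) → ℝ be continuous with 1 ≤ r(x) ≤ p(x) for all x in closure(Ω). Then every u ∈ L^H(Ω) belongs to L^{r(·)}(Ω), and there exists a constant C > 0 such that ‖u‖_{r(·)} ≤ C ‖u‖_H for all u ∈ L^H(Ω); that is, the embedding L^H(Ω) ↪ L^{r(·)}(Ω) is continuous. (Lebesgue-space part of Proposition 2.2(i).) -/

import Mathlib

open MeasureTheory Filter Topology
open scoped ENNReal

theorem aux_scale (t K e : ℝ) (hK : 1 ≤ K) (he : 1 ≤ e) :
    |t / K| ^ e ≤ K⁻¹ * |t| ^ e := by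
  have hK0 : 0 < K := by linarith
  rw [abs_div, abs_of_pos hK0, Real.div_rpow (abs_nonneg _) hK0.le, div_eq_inv_mul]
  have h1 : K ≤ K ^ e := Real.self_le_rpow_of_one_le hK he
  have h2 : 0 ≤ |t| ^ e := Real.rpow_nonneg (abs_nonneg _) _
  gcongr

theorem aux_le (t r p : ℝ) (hr : 1 ≤ r) (hrp : r ≤ p) :
    |t| ^ r ≤ 1 + |t| ^ p := by
  rcases le_total (|t|) 1 with h | h
  · have h1 := Real.rpow_le_one (abs_nonneg t) h (by linarith : 0 ≤ r)
    have h2 : 0 ≤ |t| ^ p := Real.rpow_nonneg (abs_nonneg _) _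
    linarith
  · have h1 := Real.rpow_le_rpow_of_exponent_le h hrp
    linarith

theorem stmt_8
    (N : ℕ) (hN : 2 ≤ N)
    (Ω : Set (Fin N → ℝ)) (hΩo : IsOpen Ω) (hΩb : Bornology.IsBounded Ω)
    (p q : (Fin N → ℝ) → ℝ)
    (hpc : ContinuousOn p (closure Ω)) (hqc : ContinuousOn q (closure Ω))
    (hpq : ∀ x ∈ closure Ω, 1 < p x ∧ p x < (N : ℝ) ∧ p x < q x ∧
      q x < (N : ℝ) * p x / ((N : ℝ) - p x))
    (μ : (Fin N → ℝ) → ℝ) (hμm : Measurable μ)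
    (hμ0 : ∀ᵐ x ∂(volume.restrict Ω), 0 ≤ μ x)
    (hμb : ∃ C : ℝ, ∀ᵐ x ∂(volume.restrict Ω), μ x ≤ C)
    (ρ : ((Fin N → ℝ) → ℝ) → ℝ≥0∞)
    (hρ : ρ = fun u => ∫⁻ x in Ω, ENNReal.ofReal (|u x| ^ p x + μ x * |u x| ^ q x))
    (nrm : ((Fin N → ℝ) → ℝ) → ℝ)
    (hnrm : nrm = fun u => sInf {τ : ℝ | 0 < τ ∧ ρ (fun x => u x / τ) ≤ 1})
    (r : (Fin N → ℝ) → ℝ) (hrc : ContinuousOn r (closure Ω))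
    (hr : ∀ x ∈ closure Ω, 1 ≤ r x ∧ r x ≤ p x)
    (ρr : ((Fin N → ℝ) → ℝ) → ℝ≥0∞)
    (hρr : ρr = fun u => ∫⁻ x in Ω, ENNReal.ofReal (|u x| ^ r x))
    (nrmr : ((Fin N → ℝ) → ℝ) → ℝ)
    (hnrmr : nrmr = fun u => sInf {τ : ℝ | 0 < τ ∧ ρr (fun x => u x / τ) ≤ 1}) :
    (∀ u : (Fin N → ℝ) → ℝ, Measurable u → ρ u < ⊤ → ρr u < ⊤) ∧
      ∃ C : ℝ, 0 < C ∧ ∀ u : (Fin N → ℝ) → ℝ, Measurable u → ρ u < ⊤ →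
        nrmr u ≤ C * nrm u := by
  have hΩm := hΩo.measurableSet
  have hmem : ∀ᵐ x ∂(volume.restrict Ω), x ∈ Ω := ae_restrict_mem hΩm
  have hvol : volume Ω < ⊤ := hΩb.measure_lt_top
  -- comparison of modulars
  have hcmp : ∀ u, ρr u ≤ volume Ω + ρ u := by
    intro u
    rw [hρ, hρr]
    calc ∫⁻ x in Ω, ENNReal.ofReal (|u x| ^ r x)
        ≤ ∫⁻ x in Ω, (1 + ENNReal.ofReal (|u x| ^ p x + μ x * |u x| ^ q x)) := by
          apply lintegral_mono_ae
          filter_upwards [hmem, hμ0] with x hx hm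
          have hx' := subset_closure hx
          have h1 := aux_le (u x) (r x) (p x) (hr x hx').1 (hr x hx').2
          have h2 : 0 ≤ |u x| ^ p x := Real.rpow_nonneg (abs_nonneg _) _
          have h3 : 0 ≤ μ x * |u x| ^ q x := mul_nonneg hm (Real.rpow_nonneg (abs_nonneg _) _)
          rw [← ENNReal.ofReal_one, ← ENNReal.ofReal_add zero_le_one (by linarith)]
          exact ENNReal.ofReal_le_ofReal (by linarith)
      _ = _ := by
          rw [lintegral_add_left measurable_const]
          simp
  have hsr : ∀ u, ∀ K : ℝ, 1 ≤ K → ρr (fun x => u x / K) ≤ ENNReal.ofReal K⁻¹ * ρr u := by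
    intro u K hK
    rw [hρr]
    simp only
    rw [← lintegral_const_mul' _ _ ENNReal.ofReal_ne_top]
    apply lintegral_mono_ae
    filter_upwards [hmem] with x hx
    have hx' := subset_closure hx
    rw [← ENNReal.ofReal_mul (by positivity)]
    exact ENNReal.ofReal_le_ofReal (aux_scale _ _ _ hK (hr x hx').1)
  have hs : ∀ u, ∀ K : ℝ, 1 ≤ K → ρ (fun x => u x / K) ≤ ENNReal.ofReal K⁻¹ * ρ u := by
    intro u K hK
    rw [hρ]
    simp only
    rw [← lintegral_const_mul' _ _ ENNReal.ofReal_ne_top]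
    apply lintegral_mono_ae
    filter_upwards [hmem, hμ0] with x hx hm
    obtain ⟨h1, h2, h3, h4⟩ := hpq x (subset_closure hx)
    rw [← ENNReal.ofReal_mul (by positivity)]
    apply ENNReal.ofReal_le_ofReal
    have a1 := aux_scale (u x) K (p x) hK h1.le
    have a2 := mul_le_mul_of_nonneg_left (aux_scale (u x) K (q x) hK (by linarith)) hm
    linarith
  have hinv : ∀ a : ℝ≥0∞, ∀ K : ℝ, 0 < K → a ≤ ENNReal.ofReal K →
      ENNReal.ofReal K⁻¹ * a ≤ 1 := by
    intro a K hK ha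
    calc ENNReal.ofReal K⁻¹ * a ≤ ENNReal.ofReal K⁻¹ * ENNReal.ofReal K := by gcongr
      _ = 1 := by
        rw [← ENNReal.ofReal_mul (by positivity), inv_mul_cancel₀ hK.ne', ENNReal.ofReal_one]
  refine ⟨fun u _ h => (hcmp u).trans_lt (ENNReal.add_lt_top.2 ⟨hvol, h⟩), ?_⟩
  set K : ℝ := (volume Ω).toReal + 1 with hKdef
  have hK1 : 1 ≤ K := by
    have : 0 ≤ (volume Ω).toReal := ENNReal.toReal_nonneg
    linarith
  have hK0 : 0 < K := by linarith
  have hKv : volume Ω + 1 = ENNReal.ofReal K := by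
    rw [hKdef, ENNReal.ofReal_add ENNReal.toReal_nonneg zero_le_one,
      ENNReal.ofReal_toReal hvol.ne, ENNReal.ofReal_one]
  refine ⟨K, hK0, fun u _ hu => ?_⟩
  rw [hnrm, hnrmr]
  simp only
  have hne : {τ : ℝ | 0 < τ ∧ ρ (fun x => u x / τ) ≤ 1}.Nonempty := by
    have h0 : 0 ≤ (ρ u).toReal := ENNReal.toReal_nonneg
    refine ⟨(ρ u).toReal + 1, by linarith, (hs u _ (by linarith)).trans ?_⟩
    apply hinv _ _ (by linarith)
    calc ρ u = ENNReal.ofReal (ρ u).toReal := (ENNReal.ofReal_toReal hu.ne).symm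
      _ ≤ _ := ENNReal.ofReal_le_ofReal (by linarith)
  rw [← div_le_iff₀' hK0]
  apply le_csInf hne
  rintro τ ⟨hτ, h1⟩
  rw [div_le_iff₀' hK0]
  apply csInf_le ⟨0, fun t ht => ht.1.le⟩
  refine ⟨by positivity, ?_⟩
  have h2 := hsr (fun x => u x / τ) K hK1
  have h3 : (fun x => u x / (K * τ)) = fun x => u x / τ / K := by
    funext x
    rw [div_div, mul_comm]
  rw [h3]
  refine h2.trans (hinv _ _ hK0 ((hcmp _).trans ?_))
  rw [← hKv]
  gcongr
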